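/- Let u be a monotone traveling wave solution of the balanced Allen-Cahn equation in the plane, and assume u together with its derivatives up to third order is bounded on ℝ². Then the function h(x) := ∫_ℝ ∂u/∂x(x,y) · ∂u/∂y(x,y) dy is well defined and bounded on ℝ, is differentiable, and satisfies h'(x) = − c ∫_ℝ (∂u/∂y(x,y))² dy for every x ∈ ℝ; consequently ∫_a^b ∫_ℝ (∂u/∂y)² dy dx = (h(a) − h(b))/c for all a < b. -/

import Mathlib

open Real Filter MeasureTheory Metric

noncomputable def pdx (u : ℝ → ℝ → ℝ) (x y : ℝ) : ℝ := deriv (fun t => u t y) x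

noncomputable def pdy (u : ℝ → ℝ → ℝ) (x y : ℝ) : ℝ := deriv (fun t => u x t) y

noncomputable def pdxx (u : ℝ → ℝ → ℝ) (x y : ℝ) : ℝ := deriv (fun t => pdx u t y) x

noncomputable def pdyy (u : ℝ → ℝ → ℝ) (x y : ℝ) : ℝ := deriv (fun t => pdy u x t) y

/-- `F` is a balanced double-well potential. -/
def BalancedDoubleWell (F : ℝ → ℝ) : Prop :=
  ContDiff ℝ 3 F ∧ deriv F (-1) = 0 ∧ deriv F 1 = 0 ∧
  0 < deriv (deriv F) (-1) ∧ 0 < deriv (deriv F) 1 ∧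
  (∀ s ∈ Set.Ioo (-1 : ℝ) 0, 0 < deriv F s) ∧
  (∀ s ∈ Set.Ioo (0 : ℝ) 1, deriv F s < 0) ∧
  F (-1) = 0 ∧ F 1 = 0

/-- `u` is a `C³` solution of `Δu + c uᵧ = F'(u)` on `ℝ²` with `|u| ≤ 1`
which is monotone in `y`. -/
def IsSolution (F : ℝ → ℝ) (c : ℝ) (u : ℝ → ℝ → ℝ) : Prop :=
  ContDiff ℝ 3 (fun p : ℝ × ℝ => u p.1 p.2) ∧
  (∀ x y : ℝ, pdxx u x y + pdyy u x y + c * pdy u x y = deriv F (u x y)) ∧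
  (∀ x y : ℝ, |u x y| ≤ 1) ∧
  (∀ x y : ℝ, 0 < pdy u x y)

/-- A monotone traveling wave solution connecting `-1` to `1`. -/
def IsTravelingWave (F : ℝ → ℝ) (c : ℝ) (u : ℝ → ℝ → ℝ) : Prop :=
  IsSolution F c u ∧
  (∀ x : ℝ, Tendsto (fun y => u x y) atTop (nhds 1)) ∧
  (∀ x : ℝ, Tendsto (fun y => u x y) atBot (nhds (-1)))

/-- A nonnegative function on `ℝ` with `K`-Lipschitz derivative satisfies `f'² ≤ 4 K f`. -/
lemma sq_deriv_le_of_nonneg_of_lipschitz {f f' : ℝ → ℝ} {K : ℝ} (hK : 0 < K)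
    (hf : ∀ t, HasDerivAt f (f' t) t) (hnonneg : ∀ t, 0 ≤ f t)
    (hlip : ∀ s t, |f' s - f' t| ≤ K * |s - t|) (t : ℝ) : f' t ^ 2 ≤ 4 * K * f t := by
  have taylor : ∀ s, f (t + s) ≤ f t + f' t * s + K * s ^ 2 := by
    intro s
    have h := (convex_uIcc t (t + s)).norm_image_sub_le_of_norm_hasDerivWithin_le
      (f := fun r => f r - f' t * r) (f' := fun r => f' r - f' t) (C := K * |s|)
      (fun r _ => ((hf r).sub (by simpa using (hasDerivAt_id r).const_mul (f' t))).hasDerivWithinAt)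
      (fun r hr => (hlip r t).trans (by
        have := Set.abs_sub_left_of_mem_uIcc hr
        rw [add_sub_cancel_left] at this
        exact mul_le_mul_of_nonneg_left this hK.le))
      Set.left_mem_uIcc Set.right_mem_uIcc
    have h' := (le_abs_self _).trans h
    have hs : |s| * |s| = s ^ 2 := by rw [← sq, sq_abs]
    simp only [add_sub_cancel_left, Real.norm_eq_abs, mul_assoc, hs] at h'
    linarith
  have h := (hnonneg _).trans (taylor (-f' t / (2 * K)))
  have e : f' t * (-f' t / (2 * K)) + K * (-f' t / (2 * K)) ^ 2 = -(f' t ^ 2 / (4 * K)) := by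
    field_simp
    ring
  have h2 : f' t ^ 2 / (4 * K) ≤ f t := by linarith
  rw [div_le_iff₀ (by positivity)] at h2
  linarith

/-- A monotone differentiable function with finite limits at `±∞` has integrable derivative. -/
lemma integrable_of_hasDerivAt_of_nonneg {g g' : ℝ → ℝ} {l m : ℝ}
    (hderiv : ∀ t, HasDerivAt g (g' t) t) (hcont : Continuous g') (hnonneg : ∀ t, 0 ≤ g' t)
    (htop : Tendsto g atTop (nhds l)) (hbot : Tendsto g atBot (nhds m)) : Integrable g' := by
  have hmono : Monotone g := monotone_of_hasDerivAt_nonneg hderiv hnonneg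
  refine integrable_of_intervalIntegral_norm_bounded (a := fun n : ℕ => -(n : ℝ))
    (b := fun n : ℕ => (n : ℝ)) (l := atTop) (l - m)
    (fun n => (hcont.integrableOn_Icc).mono_set Set.Ioc_subset_Icc_self)
    (tendsto_neg_atTop_atBot.comp tendsto_natCast_atTop_atTop) tendsto_natCast_atTop_atTop
    (Eventually.of_forall fun n => ?_)
  simp only [Real.norm_eq_abs, abs_of_nonneg (hnonneg _)]
  rw [intervalIntegral.integral_eq_sub_of_hasDerivAt (fun t _ => hderiv t)
    (hcont.intervalIntegrable _ _)]
  exact sub_le_sub (hmono.ge_of_tendsto htop _) (hmono.le_of_tendsto hbot _)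

/-- If `B` is continuous, nonnegative and bounded and `∫ B x y dy` does not depend on `x`, then
`x ↦ ∫ B x y ^ 2 dy` is continuous. -/
lemma continuous_integral_sq_of_integral_eq_const {B : ℝ → ℝ → ℝ} {M L : ℝ}
    (hcont : Continuous fun p : ℝ × ℝ => B p.1 p.2) (hnonneg : ∀ x y, 0 ≤ B x y)
    (hle : ∀ x y, B x y ≤ M) (hint : ∀ x, Integrable (B x)) (hL : ∀ x, ∫ y, B x y = L)
    (hint2 : ∀ x, Integrable fun y => B x y ^ 2) :
    Continuous fun x => ∫ y, B x y ^ 2 := by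
  have hnat : Tendsto (fun n : ℕ => (n : ℝ)) atTop atTop := tendsto_natCast_atTop_atTop
  have hneg : Tendsto (fun n : ℕ => -(n : ℝ)) atTop atBot := tendsto_neg_atTop_atBot.comp hnat
  have hnn : ∀ n : ℕ, -(n : ℝ) ≤ n := fun n => by linarith [n.cast_nonneg (α := ℝ)]
  have hdini : TendstoLocallyUniformly (fun (n : ℕ) x => ∫ y in -(n : ℝ)..n, B x y)
      (fun _ => L) atTop := by
    refine Monotone.tendstoLocallyUniformly_of_forall_tendsto
      (fun n => intervalIntegral.continuous_parametric_intervalIntegral_of_continuous' hcont _ _)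
      ?_ continuous_const
      (fun x => hL x ▸ intervalIntegral_tendsto_integral (hint x) hneg hnat)
    intro m n hmn x
    have hmn' : (m : ℝ) ≤ n := by exact_mod_cast hmn
    exact intervalIntegral.integral_mono_interval (neg_le_neg hmn') (hnn m) hmn'
      (Eventually.of_forall (hnonneg x)) (hint x).intervalIntegrable
  have hunif : TendstoLocallyUniformly (fun (n : ℕ) x => ∫ y in -(n : ℝ)..n, B x y ^ 2)
      (fun x => ∫ y, B x y ^ 2) atTop := by
    rw [Metric.tendstoLocallyUniformly_iff] at hdini ⊢
    intro ε hε x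
    have hM : 0 ≤ M := (hnonneg 0 0).trans (hle 0 0)
    obtain ⟨t, ht, h⟩ := hdini (ε / (M + 1)) (by positivity) x
    refine ⟨t, ht, h.mono fun n hn z hz => ?_⟩
    have h1 := hn z hz
    rw [Real.dist_eq, lt_div_iff₀ (by positivity)] at h1
    rw [Real.dist_eq]
    have hlow : ∫ y in -(n : ℝ)..n, B z y ≤ L := by
      rw [← hL z, intervalIntegral.integral_of_le (hnn n)]
      exact setIntegral_le_integral (hint z) (Eventually.of_forall (hnonneg z))
    have hlow2 : ∫ y in -(n : ℝ)..n, B z y ^ 2 ≤ ∫ y, B z y ^ 2 := by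
      rw [intervalIntegral.integral_of_le (hnn n)]
      exact setIntegral_le_integral (hint2 z) (Eventually.of_forall fun y => sq_nonneg _)
    have hdiff : ∫ y in -(n : ℝ)..n, (M * B z y - B z y ^ 2) ≤ ∫ y, (M * B z y - B z y ^ 2) := by
      rw [intervalIntegral.integral_of_le (hnn n)]
      refine setIntegral_le_integral (((hint z).const_mul M).sub (hint2 z))
        (Eventually.of_forall fun y => ?_)
      have := mul_nonneg (hnonneg z y) (sub_nonneg.2 (hle z y))
      show 0 ≤ M * B z y - B z y ^ 2
      linarith
    rw [intervalIntegral.integral_sub ((hint z).const_mul M).intervalIntegrable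
      (hint2 z).intervalIntegrable, integral_sub ((hint z).const_mul M) (hint2 z),
      intervalIntegral.integral_const_mul, integral_const_mul, hL z] at hdiff
    rw [abs_of_nonneg (sub_nonneg.2 hlow)] at h1
    rw [abs_of_nonneg (sub_nonneg.2 hlow2)]
    linarith
  have hcont2 : Continuous fun p : ℝ × ℝ => B p.1 p.2 ^ 2 := hcont.pow 2
  exact hunif.continuous (Frequently.of_forall fun n =>
    intervalIntegral.continuous_parametric_intervalIntegral_of_continuous' hcont2 _ _)

lemma hasDerivAt_prodMk_right {V : ℝ × ℝ → ℝ} {V' : ℝ × ℝ →L[ℝ] ℝ} {x y : ℝ}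
    (h : HasFDerivAt V V' (x, y)) : HasDerivAt (fun t => V (t, y)) (V' (1, 0)) x :=
  h.comp_hasDerivAt x ((hasDerivAt_id x).prodMk (hasDerivAt_const x y))

lemma hasDerivAt_prodMk_left {V : ℝ × ℝ → ℝ} {V' : ℝ × ℝ →L[ℝ] ℝ} {x y : ℝ}
    (h : HasFDerivAt V V' (x, y)) : HasDerivAt (fun t => V (x, t)) (V' (0, 1)) y :=
  h.comp_hasDerivAt y ((hasDerivAt_const y x).prodMk (hasDerivAt_id y))

section Solution

variable {F : ℝ → ℝ} {c : ℝ} {u : ℝ → ℝ → ℝ}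

lemma fderiv_apply_one_zero (hu : ContDiff ℝ 3 fun p : ℝ × ℝ => u p.1 p.2) (p : ℝ × ℝ) :
    fderiv ℝ (fun p : ℝ × ℝ => u p.1 p.2) p (1, 0) = pdx u p.1 p.2 :=
  (hasDerivAt_prodMk_right ((hu.differentiable (by norm_num)) (p.1, p.2)).hasFDerivAt).deriv.symm

lemma fderiv_apply_zero_one (hu : ContDiff ℝ 3 fun p : ℝ × ℝ => u p.1 p.2) (p : ℝ × ℝ) :
    fderiv ℝ (fun p : ℝ × ℝ => u p.1 p.2) p (0, 1) = pdy u p.1 p.2 :=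
  (hasDerivAt_prodMk_left ((hu.differentiable (by norm_num)) (p.1, p.2)).hasFDerivAt).deriv.symm

lemma contDiff_pdx (hu : ContDiff ℝ 3 fun p : ℝ × ℝ => u p.1 p.2) :
    ContDiff ℝ 2 fun p : ℝ × ℝ => pdx u p.1 p.2 := by
  simp only [← fderiv_apply_one_zero hu]
  exact (hu.fderiv_right (m := 2) (by norm_num)).clm_apply contDiff_const

lemma contDiff_pdy (hu : ContDiff ℝ 3 fun p : ℝ × ℝ => u p.1 p.2) :
    ContDiff ℝ 2 fun p : ℝ × ℝ => pdy u p.1 p.2 := by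
  simp only [← fderiv_apply_zero_one hu]
  exact (hu.fderiv_right (m := 2) (by norm_num)).clm_apply contDiff_const

lemma hasDerivAt_pdx (hu : ContDiff ℝ 3 fun p : ℝ × ℝ => u p.1 p.2) (x y : ℝ) :
    HasDerivAt (fun t => u t y) (pdx u x y) x :=
  fderiv_apply_one_zero hu (x, y) ▸
    hasDerivAt_prodMk_right ((hu.differentiable (by norm_num)) (x, y)).hasFDerivAt

lemma hasDerivAt_pdy (hu : ContDiff ℝ 3 fun p : ℝ × ℝ => u p.1 p.2) (x y : ℝ) :
    HasDerivAt (fun t => u x t) (pdy u x y) y :=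
  fderiv_apply_zero_one hu (x, y) ▸
    hasDerivAt_prodMk_left ((hu.differentiable (by norm_num)) (x, y)).hasFDerivAt

/-- Equality of mixed partial derivatives. -/
lemma fderiv_pdx_zero_one_eq (hu : ContDiff ℝ 3 fun p : ℝ × ℝ => u p.1 p.2) (p : ℝ × ℝ) :
    fderiv ℝ (fun p : ℝ × ℝ => pdx u p.1 p.2) p (0, 1) =
      fderiv ℝ (fun p : ℝ × ℝ => pdy u p.1 p.2) p (1, 0) := by
  have hsymm := (hu.contDiffAt (x := p)).isSymmSndFDerivAt (by simp; norm_num) (0, 1) (1, 0)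
  have hdiff : DifferentiableAt ℝ (fderiv ℝ fun p : ℝ × ℝ => u p.1 p.2) p :=
    ((hu.fderiv_right (m := 2) (by norm_num)).differentiable (by norm_num)) p
  simp only [← fderiv_apply_one_zero hu, ← fderiv_apply_zero_one hu]
  rw [fderiv_clm_apply hdiff (differentiableAt_const _),
    fderiv_clm_apply hdiff (differentiableAt_const _)]
  simpa using hsymm

/-- The divergence theorem for the field `(uₓ uᵧ, (uᵧ² - uₓ²) / 2 - F(u))`, whose divergence is
`-c uᵧ²`. -/
lemma integral_rectangle_sq_pdy (hF : ContDiff ℝ 3 F) (hu : IsSolution F c u) (a b r s : ℝ) :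
    ∫ x in a..b, ∫ y in r..s, -(c * pdy u x y ^ 2) =
      (∫ x in a..b, ((pdy u x s ^ 2 - pdx u x s ^ 2) / 2 - F (u x s))) -
        (∫ x in a..b, ((pdy u x r ^ 2 - pdx u x r ^ 2) / 2 - F (u x r))) +
        (∫ y in r..s, pdx u b y * pdy u b y) - ∫ y in r..s, pdx u a y * pdy u a y := by
  obtain ⟨hC, hpde, -, -⟩ := hu
  have hA := contDiff_pdx hC
  have hB := contDiff_pdy hC
  set U : ℝ × ℝ → ℝ := fun p => u p.1 p.2 with hU
  set A : ℝ × ℝ → ℝ := fun p => pdx u p.1 p.2 with hAdef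
  set B : ℝ × ℝ → ℝ := fun p => pdy u p.1 p.2 with hBdef
  have hUd := hC.differentiable (by norm_num)
  have hAd := hA.differentiable (by norm_num)
  have hBd := hB.differentiable (by norm_num)
  have hFd := hF.differentiable (by norm_num)
  have hdiv : ∀ p, (A p • fderiv ℝ B p + B p • fderiv ℝ A p) (1, 0) +
      ((2 : ℝ)⁻¹ • ((2 * B p) • fderiv ℝ B p - (2 * A p) • fderiv ℝ A p) -
        deriv F (U p) • fderiv ℝ U p) (0, 1) = -(c * B p ^ 2) := by
    rintro ⟨x, y⟩
    have hxx : fderiv ℝ A (x, y) (1, 0) = pdxx u x y :=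
      (hasDerivAt_prodMk_right (hAd (x, y)).hasFDerivAt).deriv.symm
    have hyy : fderiv ℝ B (x, y) (0, 1) = pdyy u x y :=
      (hasDerivAt_prodMk_left (hBd (x, y)).hasFDerivAt).deriv.symm
    have hxy : fderiv ℝ A (x, y) (0, 1) = fderiv ℝ B (x, y) (1, 0) :=
      fderiv_pdx_zero_one_eq hC (x, y)
    have hy : fderiv ℝ U (x, y) (0, 1) = B (x, y) := fderiv_apply_zero_one hC (x, y)
    have hp : pdxx u x y + pdyy u x y + c * B (x, y) = deriv F (U (x, y)) := hpde x y
    simp only [add_apply, sub_apply,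
      smul_apply, smul_eq_mul, hxx, hyy, hxy, hy, ← hp]
    ring
  have key := integral2_divergence_prod_of_hasFDerivAt_off_countable
    (fun p => A p * B p) (fun p => (B p ^ 2 - A p ^ 2) / 2 - F (U p))
    (fun p => A p • fderiv ℝ B p + B p • fderiv ℝ A p)
    (fun p => (2 : ℝ)⁻¹ • ((2 * B p) • fderiv ℝ B p - (2 * A p) • fderiv ℝ A p) -
        deriv F (U p) • fderiv ℝ U p) a r b s ∅ Set.countable_empty
    (hA.continuous.mul hB.continuous).continuousOn
    ((((hB.continuous.pow 2).sub (hA.continuous.pow 2)).div_const 2).sub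
      (hF.continuous.comp hC.continuous)).continuousOn
    (fun p _ => (hAd p).hasFDerivAt.mul (hBd p).hasFDerivAt)
    (fun p _ => by
      have h1 := ((hBd p).hasFDerivAt.pow 2).sub ((hAd p).hasFDerivAt.pow 2)
      have h2 := (hFd (U p)).hasDerivAt.comp_hasFDerivAt p (hUd p).hasFDerivAt
      have h3 := (h1.const_mul (2 : ℝ)⁻¹).sub h2
      simp only [Nat.add_one_sub_one, pow_one, nsmul_eq_mul, Nat.cast_ofNat] at h3
      refine h3.congr_of_eventuallyEq (Eventually.of_forall fun q => ?_)
      show _ = 2⁻¹ * (B q ^ 2 - A q ^ 2) - F (U q)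
      ring)
    (by
      simp only [hdiv]
      exact (continuous_const.mul (hB.continuous.pow 2)).neg.continuousOn.integrableOn_compact
        (isCompact_uIcc.prod isCompact_uIcc))
  simp only [hdiv] at key
  exact key

/-- First derivatives of `u` are controlled by `1 - u` and `1 + u`. -/
lemma exists_sq_partial_le (hC : ContDiff ℝ 3 fun p : ℝ × ℝ => u p.1 p.2)
    (habs : ∀ x y, |u x y| ≤ 1)
    (hbd : ∃ M : ℝ, ∀ p, ‖iteratedFDeriv ℝ 2 (fun q : ℝ × ℝ => u q.1 q.2) p‖ ≤ M) :
    ∃ K : ℝ, ∀ x y, pdx u x y ^ 2 ≤ K * (1 - u x y) ∧ pdx u x y ^ 2 ≤ K * (1 + u x y) ∧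
      pdy u x y ^ 2 ≤ K * (1 - u x y) ∧ pdy u x y ^ 2 ≤ K * (1 + u x y) := by
  obtain ⟨M, hM⟩ := hbd
  have hK : 0 < |M| + 1 := by positivity
  have hlip : ∀ p q : ℝ × ℝ, ‖fderiv ℝ (fun q : ℝ × ℝ => u q.1 q.2) p -
      fderiv ℝ (fun q : ℝ × ℝ => u q.1 q.2) q‖ ≤ (|M| + 1) * ‖p - q‖ := by
    intro p q
    refine convex_univ.norm_image_sub_le_of_norm_fderiv_le (𝕜 := ℝ)
      (fun z _ => ((hC.fderiv_right (m := 2) (by norm_num)).differentiable (by norm_num)) z)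
      (fun z _ => ?_) (Set.mem_univ q) (Set.mem_univ p)
    rw [← norm_iteratedFDeriv_one, norm_iteratedFDeriv_fderiv]
    exact (hM z).trans (by linarith [le_abs_self M])
  have hlipx : ∀ y s t, |pdx u s y - pdx u t y| ≤ (|M| + 1) * |s - t| := by
    intro y s t
    have h := (ContinuousLinearMap.le_opNorm _ ((1, 0) : ℝ × ℝ)).trans
      (mul_le_mul_of_nonneg_right (hlip (s, y) (t, y)) (norm_nonneg ((1, 0) : ℝ × ℝ)))
    simpa [Prod.norm_def, fderiv_apply_one_zero hC] using h
  have hlipy : ∀ x s t, |pdy u x s - pdy u x t| ≤ (|M| + 1) * |s - t| := by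
    intro x s t
    have h := (ContinuousLinearMap.le_opNorm _ ((0, 1) : ℝ × ℝ)).trans
      (mul_le_mul_of_nonneg_right (hlip (x, s) (x, t)) (norm_nonneg ((0, 1) : ℝ × ℝ)))
    simpa [Prod.norm_def, fderiv_apply_zero_one hC] using h
  refine ⟨4 * (|M| + 1), fun x y => ⟨?_, ?_, ?_, ?_⟩⟩
  · have h := sq_deriv_le_of_nonneg_of_lipschitz hK (fun t => (hasDerivAt_pdx hC t y).const_sub 1)
      (fun t => by linarith [(abs_le.1 (habs t y)).2])
      (fun s t => by simpa [abs_sub_comm, add_comm, ← sub_eq_add_neg] using hlipx y s t) x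
    simpa using h
  · exact sq_deriv_le_of_nonneg_of_lipschitz hK (fun t => (hasDerivAt_pdx hC t y).const_add 1)
      (fun t => by linarith [(abs_le.1 (habs t y)).1]) (hlipx y) x
  · have h := sq_deriv_le_of_nonneg_of_lipschitz hK (fun t => (hasDerivAt_pdy hC x t).const_sub 1)
      (fun t => by linarith [(abs_le.1 (habs x t)).2])
      (fun s t => by simpa [abs_sub_comm, add_comm, ← sub_eq_add_neg] using hlipy x s t) y
    simpa using h
  · exact sq_deriv_le_of_nonneg_of_lipschitz hK (fun t => (hasDerivAt_pdy hC x t).const_add 1)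
      (fun t => by linarith [(abs_le.1 (habs x t)).1]) (hlipy x) y

/-- The boundary flux through horizontal segments receding along `l` tends to zero if `u` tends
along `l` to a zero `e` of `F`. -/
lemma tendsto_integral_boundary_flux {l : Filter ℝ} [l.IsCountablyGenerated] {e K M : ℝ}
    (hF : ContDiff ℝ 3 F) (he : F e = 0)
    (hC : ContDiff ℝ 3 fun p : ℝ × ℝ => u p.1 p.2) (habs : ∀ x y, |u x y| ≤ 1)
    (hM : ∀ x y, |pdx u x y| ≤ M ∧ |pdy u x y| ≤ M)
    (hK : ∀ x y, pdx u x y ^ 2 ≤ K * |u x y - e| ∧ pdy u x y ^ 2 ≤ K * |u x y - e|)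
    (hl : ∀ x, Tendsto (fun y => u x y) l (nhds e)) (a b : ℝ) :
    Tendsto (fun y => ∫ x in a..b, ((pdy u x y ^ 2 - pdx u x y ^ 2) / 2 - F (u x y))) l
      (nhds 0) := by
  obtain ⟨C, hCF⟩ := (isCompact_Icc (a := (-1 : ℝ)) (b := 1)).exists_bound_of_continuousOn
    hF.continuous.continuousOn
  have hlim : ∀ x, Tendsto (fun y => (pdy u x y ^ 2 - pdx u x y ^ 2) / 2 - F (u x y)) l
      (nhds 0) := by
    intro x
    have h0 : Tendsto (fun y => K * |u x y - e|) l (nhds 0) := by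
      simpa using (((hl x).sub_const e).abs).const_mul K
    have hx := squeeze_zero (fun y => sq_nonneg (pdx u x y)) (fun y => (hK x y).1) h0
    have hy := squeeze_zero (fun y => sq_nonneg (pdy u x y)) (fun y => (hK x y).2) h0
    have hFu := (hF.continuous.tendsto e).comp (hl x)
    simpa [he] using ((hy.sub hx).div_const 2).sub hFu
  have hcont : Continuous fun p : ℝ × ℝ =>
      (pdy u p.1 p.2 ^ 2 - pdx u p.1 p.2 ^ 2) / 2 - F (u p.1 p.2) :=
    ((((contDiff_pdy hC).continuous.pow 2).sub ((contDiff_pdx hC).continuous.pow 2)).div_const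
      2).sub (hF.continuous.comp hC.continuous)
  have h := intervalIntegral.tendsto_integral_filter_of_dominated_convergence (μ := volume)
    (a := a) (b := b) (l := l)
    (F := fun y x => (pdy u x y ^ 2 - pdx u x y ^ 2) / 2 - F (u x y)) (f := fun _ => 0)
    (fun _ => M ^ 2 + C)
    (Eventually.of_forall fun y =>
      (hcont.comp (continuous_id.prodMk continuous_const)).aestronglyMeasurable)
    (Eventually.of_forall fun y => Eventually.of_forall fun x _ => by
      have h1 := sq_le_sq' (abs_le.1 (hM x y).1).1 (abs_le.1 (hM x y).1).2
      have h2 := sq_le_sq' (abs_le.1 (hM x y).2).1 (abs_le.1 (hM x y).2).2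
      have h3 := abs_le.1 (hCF (u x y) (abs_le.1 (habs x y)))
      rw [Real.norm_eq_abs, abs_le]
      constructor <;> linarith [sq_nonneg (pdx u x y), sq_nonneg (pdy u x y), sq_nonneg M])
    intervalIntegrable_const
    (Eventually.of_forall fun x _ => hlim x)
  simpa using h

end Solution

/-- The flux function `h(x) = ∫ uₓ uᵧ dy` is well defined, bounded,
differentiable with `h'(x) = -c ∫ uᵧ² dy`, and the resulting integral identity
holds (computation in the proof of Lemma 2.1). -/
theorem flux_function_identity
    (F : ℝ → ℝ) (hF : BalancedDoubleWell F) (c : ℝ) (hc : 0 < c)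
    (u : ℝ → ℝ → ℝ) (hu : IsTravelingWave F c u)
    (hbd : ∀ i : ℕ, i ≤ 3 → ∃ M : ℝ,
      ∀ p : ℝ × ℝ, ‖iteratedFDeriv ℝ i (fun q : ℝ × ℝ => u q.1 q.2) p‖ ≤ M) :
    (∀ x : ℝ, Integrable (fun y => pdx u x y * pdy u x y)) ∧
    (∃ C : ℝ, ∀ x : ℝ, |∫ y, pdx u x y * pdy u x y| ≤ C) ∧
    (∀ x : ℝ, HasDerivAt (fun x' => ∫ y, pdx u x' y * pdy u x' y)
      (-(c * ∫ y, (pdy u x y) ^ 2)) x) ∧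
    (∀ a b : ℝ, a < b →
      ∫ x in a..b, ∫ y, (pdy u x y) ^ 2 =
        ((∫ y, pdx u a y * pdy u a y) - ∫ y, pdx u b y * pdy u b y) / c) := by
  obtain ⟨hsol, htop, hbot⟩ := hu
  obtain ⟨hC, -, habs, hpos⟩ := id hsol
  obtain ⟨hFC, -, -, -, -, -, -, hFneg, hFone⟩ := hF
  obtain ⟨K, hK⟩ := exists_sq_partial_le hC habs (hbd 2 (by norm_num))
  obtain ⟨M, hM1⟩ := hbd 1 (by norm_num)
  have hM : ∀ x y, |pdx u x y| ≤ M ∧ |pdy u x y| ≤ M := by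
    intro x y
    have h := hM1 (x, y)
    rw [norm_iteratedFDeriv_one] at h
    have hx := ContinuousLinearMap.le_of_opNorm_le _ h ((1, 0) : ℝ × ℝ)
    have hy := ContinuousLinearMap.le_of_opNorm_le _ h ((0, 1) : ℝ × ℝ)
    rw [fderiv_apply_one_zero hC] at hx
    rw [fderiv_apply_zero_one hC] at hy
    exact ⟨by simpa [Prod.norm_def] using hx, by simpa [Prod.norm_def] using hy⟩
  have hcx : ∀ x, Continuous fun y => pdx u x y := fun x =>
    (contDiff_pdx hC).continuous.comp (continuous_const.prodMk continuous_id)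
  have hcy : ∀ x, Continuous fun y => pdy u x y := fun x =>
    (contDiff_pdy hC).continuous.comp (continuous_const.prodMk continuous_id)
  have hint : ∀ x, Integrable fun y => pdy u x y := fun x =>
    integrable_of_hasDerivAt_of_nonneg (hasDerivAt_pdy hC x) (hcy x) (fun y => (hpos x y).le)
      (htop x) (hbot x)
  have hmass : ∀ x, ∫ y, pdy u x y = 2 := fun x => by
    rw [integral_of_hasDerivAt_of_tendsto (hasDerivAt_pdy hC x) (hint x) (hbot x) (htop x)]
    norm_num
  have hintxy : ∀ x, Integrable fun y => pdx u x y * pdy u x y := fun x =>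
    (hint x).bdd_mul (hcx x).aestronglyMeasurable (Eventually.of_forall fun y => (hM x y).1)
  have hintyy : ∀ x, Integrable fun y => pdy u x y ^ 2 := fun x => by
    simpa only [sq] using
      (hint x).bdd_mul (hcy x).aestronglyMeasurable (Eventually.of_forall fun y => (hM x y).2)
  have hgcont : Continuous fun x => ∫ y, pdy u x y ^ 2 :=
    continuous_integral_sq_of_integral_eq_const (contDiff_pdy hC).continuous
      (fun x y => (hpos x y).le) (fun x y => (le_abs_self _).trans (hM x y).2) hint hmass hintyy
  have hflux : ∀ a b, -(c * ∫ x in a..b, ∫ y, pdy u x y ^ 2) =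
      (∫ y, pdx u b y * pdy u b y) - ∫ y, pdx u a y * pdy u a y := by
    intro a b
    have hnn : ∀ r : ℝ, 0 ≤ r → -r ≤ r := fun r hr => by linarith
    have hT := tendsto_integral_boundary_flux hFC hFone hC habs hM (fun x y => by
      rw [abs_of_nonpos (by linarith [(abs_le.1 (habs x y)).2]), neg_sub]
      exact ⟨(hK x y).1, (hK x y).2.2.1⟩) htop a b
    have hB := tendsto_integral_boundary_flux hFC hFneg hC habs hM (fun x y => by
      rw [sub_neg_eq_add, add_comm, abs_of_nonneg (by linarith [(abs_le.1 (habs x y)).1])]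
      exact ⟨(hK x y).2.1, (hK x y).2.2.2⟩) hbot a b
    have hR := ((hT.sub (hB.comp tendsto_neg_atTop_atBot)).add
      (intervalIntegral_tendsto_integral (hintxy b) tendsto_neg_atTop_atBot tendsto_id)).sub
      (intervalIntegral_tendsto_integral (hintxy a) tendsto_neg_atTop_atBot tendsto_id)
    have hcont2 : Continuous fun p : ℝ × ℝ => pdy u p.1 p.2 ^ 2 :=
      (contDiff_pdy hC).continuous.pow 2
    have hL : Tendsto (fun r : ℝ => ∫ x in a..b, ∫ y in -r..r, pdy u x y ^ 2) atTop
        (nhds (∫ x in a..b, ∫ y, pdy u x y ^ 2)) := by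
      refine intervalIntegral.tendsto_integral_filter_of_dominated_convergence
        (fun x => ∫ y, pdy u x y ^ 2)
        (Eventually.of_forall fun r =>
          (intervalIntegral.continuous_parametric_intervalIntegral_of_continuous' hcont2
            _ _).aestronglyMeasurable)
        ?_ (hgcont.intervalIntegrable _ _)
        (Eventually.of_forall fun x _ =>
          intervalIntegral_tendsto_integral (hintyy x) tendsto_neg_atTop_atBot tendsto_id)
      filter_upwards [eventually_ge_atTop 0] with r hr
      refine Eventually.of_forall fun x _ => ?_
      rw [Real.norm_of_nonneg (intervalIntegral.integral_nonneg (hnn r hr) fun y _ => sq_nonneg _),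
        intervalIntegral.integral_of_le (hnn r hr)]
      exact setIntegral_le_integral (hintyy x) (Eventually.of_forall fun y => sq_nonneg _)
    have hL' := (hL.const_mul c).neg
    simp only [sub_self, zero_add] at hR
    refine tendsto_nhds_unique hL' (hR.congr fun r => ?_)
    have h := integral_rectangle_sq_pdy hFC hsol a b (-r) r
    simp only [intervalIntegral.integral_neg, intervalIntegral.integral_const_mul] at h
    exact h.symm
  refine ⟨hintxy, ⟨M * 2, fun x => ?_⟩, fun x => ?_, fun a b _ => ?_⟩
  · rw [← hmass x, ← integral_const_mul, ← Real.norm_eq_abs]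
    refine norm_integral_le_of_norm_le ((hint x).const_mul M) (Eventually.of_forall fun y => ?_)
    rw [norm_mul, Real.norm_of_nonneg (hpos x y).le]
    exact mul_le_mul_of_nonneg_right (hM x y).1 (hpos x y).le
  · have h : (fun x' => ∫ y, pdx u x' y * pdy u x' y) = fun x' =>
        (∫ y, pdx u 0 y * pdy u 0 y) + -(c * ∫ t in (0 : ℝ)..x', ∫ y, pdy u t y ^ 2) := by
      funext x'
      rw [hflux 0 x']
      ring
    rw [h]
    exact (((hgcont.integral_hasStrictDerivAt 0 x).hasDerivAt.const_mul c).neg).const_add _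
  · rw [eq_div_iff hc.ne']
    linarith [hflux a b]
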